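/- Let G be a precompact Hausdorff abelian topological group of square-free exponent, i.e. there is a square-free natural number n ≥ 1 with nx = 0 for all x ∈ G. Then the following are equivalent: (a) G is compact; (b) G is minimal; (c) G is locally minimal. -/

import Mathlib

/-- A Hausdorff topological abelian group `(G, τ)` is *locally minimal* if there exists a
neighborhood `V` of `0` such that the only Hausdorff group topology `σ` coarser than `τ`
for which `V` is still a `σ`-neighborhood of `0` is `τ` itself. -/
def LocallyMinimal (G : Type*) [AddGroup G] [τ : TopologicalSpace G] : Prop :=
  ∃ V ∈ nhds (0 : G), ∀ σ : TopologicalSpace G, τ ≤ σ →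
    @IsTopologicalAddGroup G σ _ → @T2Space G σ → V ∈ @nhds G σ 0 → σ = τ

/-- A Hausdorff topological abelian group `(G, τ)` is *minimal* if there is no Hausdorff
group topology on `G` strictly coarser than `τ`. -/
def IsMinimal (G : Type*) [AddGroup G] [τ : TopologicalSpace G] : Prop :=
  ∀ σ : TopologicalSpace G, τ ≤ σ →
    @IsTopologicalAddGroup G σ _ → @T2Space G σ → σ = τ

/-- A topological abelian group is *precompact* (totally bounded) if every neighborhood
`V` of `0` admits a finite set `F` with `F + V = G`. For Hausdorff abelian groups this is
equivalent to the Raikov completion being compact. -/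
def IsPrecompact (G : Type*) [AddCommGroup G] [TopologicalSpace G] : Prop :=
  ∀ V ∈ nhds (0 : G), ∃ F : Finset G, ∀ x : G, ∃ y ∈ F, x - y ∈ V

/-!
If `f : G → K` is a dense embedding and `N` is a small closed subgroup of `K` meeting `f(G)`
trivially, then `G → K ⧸ N` induces a coarser Hausdorff group topology on `G`; when `G` is locally
minimal this topology is the original one, and density forces `N = 0`. Now let `K` be the
completion of `G`, which has the same square-free exponent, so that every subgroup of `K` is a
direct summand. For `x ∈ K` near `0` the finite group `⟨x⟩` is small, hence a complement of
`f(G) ∩ ⟨x⟩` in `⟨x⟩` vanishes and `x ∈ f(G)`. Thus `f(G)` is open as well as dense, so `G` is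
complete, and a complete precompact group is compact.
-/

open Filter Topology

section SquarefreeExponent

variable {K : Type*} [AddCommGroup K] {n : ℕ}

theorem complementedLattice_addSubgroup_of_squarefree (hsf : Squarefree n)
    (hexp : ∀ x : K, n • x = 0) : ComplementedLattice (AddSubgroup K) := by
  have : Fact (Squarefree n) := ⟨hsf⟩
  have : NeZero n := ⟨hsf.ne_zero⟩
  have : IsSemisimpleRing (ZMod n) := IsArtinianRing.isSemisimpleRing_of_isReduced (ZMod n)
  have : Module (ZMod n) K := AddCommGroup.zmodModule hexp
  exact (AddSubgroup.toZModSubmodule n (M := K)).complementedLattice_iff.2 inferInstance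

theorem eventually_zmultiples_subset [TopologicalSpace K] [ContinuousAdd K] (hn : n ≠ 0)
    (hexp : ∀ x : K, n • x = 0) {V : Set K} (hV : V ∈ 𝓝 0) :
    ∀ᶠ x in 𝓝 (0 : K), (AddSubgroup.zmultiples x : Set K) ⊆ V := by
  classical
  have multiples_mem : ∀ᶠ x in 𝓝 (0 : K), ∀ k ∈ Finset.range n, k • x ∈ V :=
    (eventually_all_finset _).2 fun k _ ↦
      (continuous_nsmul k).continuousAt.eventually_mem (by rwa [nsmul_zero])
  filter_upwards [multiples_mem] with x hx y hy
  have hfin : IsOfFinAddOrder x :=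
    isOfFinAddOrder_iff_nsmul_eq_zero.2 ⟨n, hn.pos, hexp x⟩
  obtain ⟨k, hk, rfl⟩ :=
    Finset.mem_image.1 (hfin.mem_zmultiples_iff_mem_range_addOrderOf.1 hy)
  have order_le : addOrderOf x ≤ n := addOrderOf_le_of_nsmul_eq_zero hn.pos (hexp x)
  exact hx k (Finset.range_subset_range.2 order_le hk)

end SquarefreeExponent

/-- A subgroup `H` of a topological abelian group `K` is *locally essential* if some neighborhood
of `0` contains no nontrivial closed subgroup of `K` that meets `H` trivially. The image of a
locally minimal group under a dense embedding has this property. -/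
def LocallyEssential {K : Type*} [AddCommGroup K] [TopologicalSpace K] (H : AddSubgroup K) : Prop :=
  ∃ V ∈ 𝓝 (0 : K), ∀ N : AddSubgroup K,
    IsClosed (N : Set K) → (N : Set K) ⊆ V → Disjoint H N → N = ⊥

theorem LocallyEssential.isOpen {K : Type*} [AddCommGroup K] [TopologicalSpace K]
    [ContinuousAdd K] [T1Space K] {H : AddSubgroup K} {n : ℕ} (hH : LocallyEssential H)
    (hsf : Squarefree n) (hexp : ∀ x : K, n • x = 0) : IsOpen (H : Set K) := by
  obtain ⟨V, hV, hVH⟩ := hH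
  have := complementedLattice_addSubgroup_of_squarefree hsf hexp
  refine H.isOpen_of_mem_nhds (g := 0) ?_
  filter_upwards [eventually_zmultiples_subset hsf.ne_zero hexp hV] with x hxV
  obtain ⟨C, hdisj, hsup⟩ := IsModularLattice.exists_disjoint_and_sup_eq
    (inf_le_right : H ⊓ AddSubgroup.zmultiples x ≤ AddSubgroup.zmultiples x)
  have C_le : C ≤ AddSubgroup.zmultiples x := hsup ▸ le_sup_right
  have C_finite : (C : Set K).Finite :=
    (finite_zmultiples.2 (isOfFinAddOrder_iff_nsmul_eq_zero.2
      ⟨n, hsf.ne_zero.pos, hexp x⟩)).subset C_le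
  have C_disjoint : Disjoint H C := by
    rwa [disjoint_iff, inf_assoc, inf_eq_right.2 C_le, ← disjoint_iff] at hdisj
  have C_eq_bot : C = ⊥ := hVH C C_finite.isClosed (subset_trans C_le hxV) C_disjoint
  rw [C_eq_bot, sup_bot_eq, inf_eq_right] at hsup
  exact hsup (AddSubgroup.mem_zmultiples x)

theorem LocallyMinimal.exists_mem_nhds_forall_isInducing {G : Type*} [AddGroup G]
    [TopologicalSpace G] (hG : LocallyMinimal G) :
    ∃ V ∈ 𝓝 (0 : G), ∀ {L : Type*} [AddGroup L] [TopologicalSpace L] [IsTopologicalAddGroup L]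
      [T2Space L] (g : G →+ L), Continuous g → Function.Injective g → V ∈ comap g (𝓝 0) →
      IsInducing g := by
  obtain ⟨V, hV, hmin⟩ := hG
  refine ⟨V, hV, fun {L} _ _ _ _ g hg hinj hVg ↦ ⟨(hmin (.induced g inferInstance)
    hg.le_induced (topologicalAddGroup_induced g) ?_ ?_).symm⟩⟩
  · let : TopologicalSpace G := .induced g inferInstance
    exact .of_injective_continuous hinj continuous_induced_dom
  · rwa [nhds_induced, map_zero]

section DenseHom

variable {G K : Type*} [AddCommGroup G] [TopologicalSpace G] [AddCommGroup K] [TopologicalSpace K]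
  [T2Space K]

theorem eq_bot_of_isInducing_mk_comp {f : G →+ K} (hf : IsDenseInducing f)
    {N : AddSubgroup K} (hN : IsInducing ((QuotientAddGroup.mk' N).comp f)) : N = ⊥ := by
  refine N.eq_bot_iff_forall.2 fun y hy ↦ ?_
  have : NeBot (comap f (𝓝 y)) := hf.comap_nhds_neBot y
  have tendsto_mk : Tendsto ((QuotientAddGroup.mk' N).comp f) (comap f (𝓝 y))
      (𝓝 ((QuotientAddGroup.mk' N).comp f 0)) := by
    rw [map_zero, ← (QuotientAddGroup.eq_zero_iff y).2 hy]
    exact (QuotientAddGroup.continuous_mk.tendsto y).comp tendsto_comap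
  have tendsto_zero : Tendsto id (comap f (𝓝 y)) (𝓝 0) := hN.tendsto_nhds_iff.2 tendsto_mk
  have tendsto_f : Tendsto f (comap f (𝓝 y)) (𝓝 (f 0)) :=
    (hf.continuous.tendsto 0).comp tendsto_zero
  rw [tendsto_nhds_unique tendsto_comap tendsto_f, map_zero]

variable [IsTopologicalAddGroup K]

theorem LocallyMinimal.locallyEssential_range (hG : LocallyMinimal G) {f : G →+ K}
    (hf : IsDenseInducing f) (hinj : Function.Injective f) : LocallyEssential f.range := by
  obtain ⟨V, hV, hVind⟩ := hG.exists_mem_nhds_forall_isInducing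
  rw [hf.nhds_eq_comap, map_zero] at hV
  obtain ⟨O, hO, hOV⟩ := mem_comap.1 hV
  obtain ⟨W, hW, hWO⟩ := exists_nhds_zero_half hO
  refine ⟨W, hW, fun N hN hNW hdisj ↦ eq_bot_of_isInducing_mk_comp hf (hVind _ ?_ ?_ ?_)⟩
  · exact QuotientAddGroup.continuous_mk.comp hf.continuous
  · refine (injective_iff_map_eq_zero _).2 fun a ha ↦ (map_eq_zero_iff f hinj).1 ?_
    exact AddSubgroup.disjoint_def.1 hdisj ⟨a, rfl⟩ ((QuotientAddGroup.eq_zero_iff _).1 ha)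
  -- If `f a` is congruent modulo `N` to some `w ∈ W`, then `f a ∈ W + N ⊆ W + W ⊆ O`.
  · refine ⟨_, QuotientAddGroup.isOpenMap_coe.image_mem_nhds hW, ?_⟩
    rintro a ⟨w, hw, hwa⟩
    have diff_mem_N : -w + f a ∈ N := QuotientAddGroup.eq.1 hwa
    have : w + (-w + f a) ∈ O := hWO w hw _ (hNW diff_mem_N)
    exact hOV (by rwa [add_neg_cancel_left] at this)

theorem LocallyMinimal.surjective_of_isDenseInducing {n : ℕ} (hG : LocallyMinimal G)
    {f : G →+ K} (hf : IsDenseInducing f) (hinj : Function.Injective f) (hsf : Squarefree n)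
    (hexp : ∀ x : K, n • x = 0) : Function.Surjective f := by
  have range_isOpen : IsOpen (f.range : Set K) :=
    (hG.locallyEssential_range hf hinj).isOpen hsf hexp
  have range_isClosed : IsClosed (Set.range f) := f.range.isClosed_of_isOpen range_isOpen
  rw [← Set.range_eq_univ, ← range_isClosed.closure_eq, hf.dense.closure_range]

end DenseHom

section UniformGroup

variable {G : Type*} [AddCommGroup G] [UniformSpace G] [IsUniformAddGroup G]

theorem nsmul_completion_eq_zero {n : ℕ} (hexp : ∀ x : G, n • x = 0)
    (x : UniformSpace.Completion G) : n • x = 0 := by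
  induction x using UniformSpace.Completion.induction_on with
  | hp => exact isClosed_eq (continuous_nsmul n) continuous_const
  | ih a =>
    exact (map_nsmul UniformSpace.Completion.toCompl n a).symm.trans (by rw [hexp, map_zero])

theorem LocallyMinimal.completeSpace [T0Space G] {n : ℕ} (hG : LocallyMinimal G)
    (hsf : Squarefree n) (hexp : ∀ x : G, n • x = 0) : CompleteSpace G := by
  have toCompl_surjective : Function.Surjective (UniformSpace.Completion.toCompl (α := G)) :=
    hG.surjective_of_isDenseInducing (UniformSpace.Completion.isDenseInducing_toCompl G)
      (UniformSpace.Completion.coe_injective G) hsf (nsmul_completion_eq_zero hexp)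
  exact ((UniformSpace.Completion.isUniformInducing_coe G).completeSpace_congr
    toCompl_surjective).2 inferInstance

theorem IsPrecompact.totallyBounded_univ (hG : IsPrecompact G) :
    TotallyBounded (Set.univ : Set G) := by
  refine totallyBounded_iff_subset_finite_iUnion_nhds_zero.2 fun V hV ↦ ?_
  obtain ⟨F, hF⟩ := hG V hV
  refine ⟨F, F.finite_toSet, fun x _ ↦ ?_⟩
  obtain ⟨y, hy, hxy⟩ := hF x
  exact Set.mem_biUnion hy ⟨x - y, hxy, add_sub_cancel y x⟩

end UniformGroup

theorem LocallyMinimal.compactSpace {G : Type*} [AddCommGroup G] [TopologicalSpace G]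
    [IsTopologicalAddGroup G] [T0Space G] {n : ℕ} (hG : LocallyMinimal G) (hpre : IsPrecompact G)
    (hsf : Squarefree n) (hexp : ∀ x : G, n • x = 0) : CompactSpace G := by
  let : UniformSpace G := IsTopologicalAddGroup.rightUniformSpace G
  have : IsUniformAddGroup G := isUniformAddGroup_of_addCommGroup
  have : CompleteSpace G := hG.completeSpace hsf hexp
  exact ⟨hpre.totallyBounded_univ.isCompact_of_isClosed isClosed_univ⟩

theorem isMinimal_of_compactSpace {G : Type*} [AddGroup G] [τ : TopologicalSpace G]
    [CompactSpace G] : IsMinimal G := by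
  intro σ hle _ _
  have refl_continuous : Continuous[τ, σ] (Equiv.refl G) := continuous_id_iff_le.2 hle
  let e : @Homeomorph G G τ σ := @Continuous.homeoOfEquivCompactToT2 G G τ σ _ _ _ refl_continuous
  calc
    σ = σ.induced e := induced_id.symm
    _ = τ := @Homeomorph.induced_eq G G τ σ e

theorem IsMinimal.locallyMinimal {G : Type*} [AddGroup G] [TopologicalSpace G]
    (hG : IsMinimal G) : LocallyMinimal G :=
  ⟨Set.univ, univ_mem, fun σ hle hgroup hT2 _ ↦ hG σ hle hgroup hT2⟩

/-- For a precompact Hausdorff abelian group of square-free exponent, compactness,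
minimality and local minimality are equivalent. -/
theorem squarefree_exponent_compact_iff_minimal_iff_locallyMinimal {G : Type*}
    [AddCommGroup G] [TopologicalSpace G] [IsTopologicalAddGroup G] [T2Space G]
    (hpre : IsPrecompact G) (n : ℕ) (hn : 1 ≤ n) (hsf : Squarefree n)
    (hexp : ∀ x : G, n • x = 0) :
    (CompactSpace G ↔ IsMinimal G) ∧ (IsMinimal G ↔ LocallyMinimal G) := by
  have minimal_of_compact : CompactSpace G → IsMinimal G := fun _ ↦ isMinimal_of_compactSpace
  have compact_of_locallyMinimal : LocallyMinimal G → CompactSpace G :=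
    fun h ↦ h.compactSpace hpre hsf hexp
  exact ⟨⟨minimal_of_compact, fun h ↦ compact_of_locallyMinimal h.locallyMinimal⟩,
    ⟨IsMinimal.locallyMinimal, fun h ↦ minimal_of_compact (compact_of_locallyMinimal h)⟩⟩
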